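/- arXiv:1306.5116 — 3 statements merged into one kernel-verified Lean document; each statement's English description precedes it below -/
import Mathlib

section
/- Assume the matrix A is cofinal and let β ∈ ℝ. If there exists a non-zero almost β-harmonic vector for A, then A^n_{vw} < ∞ for all n ∈ ℕ and all v, w ∈ V. -/
open scoped ENNReal
open Filter

variable {V : Type*}

/-- The set of vertices of the graph of `A` that emit no edges or infinitely many edges. -/
def VInf (A : V → V → ℝ≥0∞) : Set V :=
  {v | {w | A v w ≠ 0} = ∅ ∨ {w | A v w ≠ 0}.Infinite}

/-- A set of vertices is hereditary if every edge with source in it has range in it. -/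
def Hereditary (A : V → V → ℝ≥0∞) (H : Set V) : Prop :=
  ∀ ⦃v w : V⦄, v ∈ H → A v w ≠ 0 → w ∈ H

/-- A set of vertices is saturated if it contains every finite emitter all of whose
out-neighbours lie in it. -/
def Saturated (A : V → V → ℝ≥0∞) (H : Set V) : Prop :=
  ∀ v : V, v ∉ VInf A → (∀ w, A v w ≠ 0 → w ∈ H) → v ∈ H

/-- `A` is cofinal if the only hereditary and saturated subsets are `∅` and `V`. -/
def Cofinal (A : V → V → ℝ≥0∞) : Prop :=
  ∀ H : Set V, Hereditary A H → Saturated A H → H = ∅ ∨ H = Set.univ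

/-- Matrix powers of `A`, with entries in `[0,∞]`. -/
noncomputable def Apow [DecidableEq V] (A : V → V → ℝ≥0∞) : ℕ → V → V → ℝ≥0∞
  | 0 => fun v w => if v = w then 1 else 0
  | n + 1 => fun v w => ∑' u, A v u * Apow A n u w

/-- `e^β` as an extended nonnegative real. -/
noncomputable def expb (β : ℝ) : ℝ≥0∞ := ENNReal.ofReal (Real.exp β)

/-- `e^{-nβ}` as an extended nonnegative real. -/
noncomputable def expn (β : ℝ) (n : ℕ) : ℝ≥0∞ := ENNReal.ofReal (Real.exp (-(n : ℝ) * β))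

/-- A vector `ξ : V → [0,∞)` is almost `β`-harmonic for `A` if
`∑_w A_{vw} ξ_w = e^β ξ_v` off `V_∞` and `∑_w A_{vw} ξ_w ≤ e^β ξ_v` on `V_∞`. -/
def IsAlmostHarmonic (A : V → V → ℝ≥0∞) (β : ℝ) (ξ : V → ℝ≥0∞) : Prop :=
  (∀ v, ξ v ≠ ⊤) ∧
  (∀ v, v ∉ VInf A → ∑' w, A v w * ξ w = expb β * ξ v) ∧
  (∀ v, v ∈ VInf A → ∑' w, A v w * ξ w ≤ expb β * ξ v)

/-- A vector `ξ : V → [0,∞)` is `β`-harmonic for `A` if `∑_w A_{vw} ξ_w = e^β ξ_v`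
for every vertex `v`. -/
def IsHarmonic (A : V → V → ℝ≥0∞) (β : ℝ) (ξ : V → ℝ≥0∞) : Prop :=
  (∀ v, ξ v ≠ ⊤) ∧ ∀ v, ∑' w, A v w * ξ w = expb β * ξ v

/-- The non-wandering vertices: those admitting a loop of positive length. -/
def NW (A : V → V → ℝ≥0∞) : Set V :=
  {v | Relation.TransGen (fun a b => A a b ≠ 0) v v}

/-- Standing assumptions i)–iii): `A` is cofinal, the graph has no sinks, the entries of
`A` are finite and all powers of `A` have finite entries. -/
def Standing [DecidableEq V] (A : V → V → ℝ≥0∞) : Prop :=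
  Cofinal A ∧ (∀ v, ∃ w, A v w ≠ 0) ∧ (∀ v w, A v w ≠ ⊤) ∧
    ∀ (n : ℕ) (v w : V), Apow A n v w ≠ ⊤

/-- A function `k` supported on `V_∞` is `β`-summable when
`∑_{u ∈ V_∞} ∑_n e^{-nβ} A^n_{uu} k_u < ∞`. -/
def BSummable [DecidableEq V] (A : V → V → ℝ≥0∞) (β : ℝ) (k : V → ℝ≥0∞) : Prop :=
  (∀ u, u ∉ VInf A → k u = 0) ∧ (∑' u, ∑' n, expn β n * Apow A n u u * k u) ≠ ⊤

/-- `k̂_v = ∑_{u ∈ V_∞} ∑_n e^{-nβ} A^n_{vu} k_u` (for `k` supported on `V_∞`). -/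
noncomputable def khat [DecidableEq V] (A : V → V → ℝ≥0∞) (β : ℝ) (k : V → ℝ≥0∞) (v : V) :
    ℝ≥0∞ :=
  ∑' u, ∑' n, expn β n * Apow A n v u * k u

/-- The first-return quantities `r_{vw}(n)`: `r_{vw}(0) = 0`, `r_{vw}(1) = A_{vw}` and
`r_{vw}(n+1) = ∑_{u ≠ w} A_{vu} r_{uw}(n)` for `n ≥ 1`. -/
noncomputable def fr [DecidableEq V] (A : V → V → ℝ≥0∞) (w : V) : ℕ → V → ℝ≥0∞
  | 0 => fun _ => 0
  | 1 => fun v => A v w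
  | n + 2 => fun v => ∑' u, if u = w then 0 else A v u * fr A w (n + 1) u

/-!
The inequality `A ξ ≤ c ξ` iterates to `Aⁿ ξ ≤ cⁿ ξ`, hence `Aⁿ_{vw} ξ_w ≤ cⁿ ξ_v`, and an infinite
entry of `Aⁿ` can only occur in a column `w` with `ξ_w = 0`. For an almost harmonic vector the zero
set is hereditary (by the inequality) and saturated (by the equality at finite emitters), so
cofinality leaves no zeros at all unless `ξ = 0`.
-/

/-- A vector `ξ` is `c`-superharmonic for `A` if `A ξ ≤ c ξ` entrywise. For `c = e^β` this is the
part of almost `β`-harmonicity that passes to the powers of `A`. -/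
def IsSuperharmonic (A : V → V → ℝ≥0∞) (c : ℝ≥0∞) (ξ : V → ℝ≥0∞) : Prop :=
  ∀ v, ∑' w, A v w * ξ w ≤ c * ξ v

namespace IsSuperharmonic

variable {A B : V → V → ℝ≥0∞} {c d : ℝ≥0∞} {ξ : V → ℝ≥0∞}

theorem apply_mul_le (h : IsSuperharmonic A c ξ) (v w : V) : A v w * ξ w ≤ c * ξ v :=
  (ENNReal.le_tsum (f := fun w => A v w * ξ w) w).trans (h v)

theorem apply_ne_top (h : IsSuperharmonic A c ξ) {v w : V} (hc : c ≠ ⊤) (hv : ξ v ≠ ⊤)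
    (hw : ξ w ≠ 0) : A v w ≠ ⊤ :=
  have hmul : A v w * ξ w ≠ ⊤ :=
    ne_top_of_le_ne_top (ENNReal.mul_ne_top hc hv) (h.apply_mul_le v w)
  (ENNReal.lt_top_of_mul_ne_top_left hmul hw).ne

theorem hereditary_setOf_eq_zero (h : IsSuperharmonic A c ξ) : Hereditary A {v | ξ v = 0} := by
  intro v w (hv : ξ v = 0) hvw
  have hle : A v w * ξ w ≤ 0 := by simpa only [hv, mul_zero] using h.apply_mul_le v w
  exact (mul_eq_zero.mp (nonpos_iff_eq_zero.mp hle)).resolve_left hvw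

theorem one [DecidableEq V] (ξ : V → ℝ≥0∞) :
    IsSuperharmonic (fun v w => if v = w then 1 else 0) 1 ξ := fun v => by
  simp

theorem mul (hA : IsSuperharmonic A c ξ) (hB : IsSuperharmonic B d ξ) :
    IsSuperharmonic (fun v w => ∑' u, A v u * B u w) (c * d) ξ := fun v =>
  calc ∑' w, (∑' u, A v u * B u w) * ξ w
      = ∑' w, ∑' u, A v u * (B u w * ξ w) := by
        simp only [← ENNReal.tsum_mul_right, mul_assoc]
    _ = ∑' u, A v u * ∑' w, B u w * ξ w := by
        rw [ENNReal.tsum_comm]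
        simp only [ENNReal.tsum_mul_left]
    _ ≤ ∑' u, A v u * (d * ξ u) := by
        gcongr with u
        exact hB u
    _ = d * ∑' u, A v u * ξ u := by
        simp only [← ENNReal.tsum_mul_left, mul_left_comm]
    _ ≤ d * (c * ξ v) := by
        gcongr
        exact hA v
    _ = c * d * ξ v := by ring

theorem apow [DecidableEq V] (h : IsSuperharmonic A c ξ) (n : ℕ) :
    IsSuperharmonic (Apow A n) (c ^ n) ξ := by
  induction n with
  | zero => exact (pow_zero c).symm ▸ one ξ
  | succ n ih => exact (pow_succ' c n).symm ▸ h.mul ih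

end IsSuperharmonic

theorem saturated_setOf_eq_zero {A : V → V → ℝ≥0∞} {c : ℝ≥0∞} {ξ : V → ℝ≥0∞} (hc : c ≠ 0)
    (h : ∀ v, v ∉ VInf A → c * ξ v ≤ ∑' w, A v w * ξ w) : Saturated A {v | ξ v = 0} := by
  intro v hv hw
  have hsum : ∑' w, A v w * ξ w = 0 :=
    ENNReal.tsum_eq_zero.mpr fun w => mul_eq_zero.mpr (or_iff_not_imp_left.mpr (hw w))
  have hle : c * ξ v ≤ 0 := (h v hv).trans_eq hsum
  exact (mul_eq_zero.mp (nonpos_iff_eq_zero.mp hle)).resolve_left hc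

namespace IsAlmostHarmonic

variable {A : V → V → ℝ≥0∞} {β : ℝ} {ξ : V → ℝ≥0∞}

theorem isSuperharmonic (h : IsAlmostHarmonic A β ξ) : IsSuperharmonic A (expb β) ξ := fun v =>
  (em (v ∈ VInf A)).elim (h.2.2 v) fun hv => (h.2.1 v hv).le

theorem apply_ne_zero (h : IsAlmostHarmonic A β ξ) (hA : Cofinal A) (hξ : ξ ≠ 0) (v : V) :
    ξ v ≠ 0 := by
  have hexp : expb β ≠ 0 := (ENNReal.ofReal_pos.mpr (Real.exp_pos β)).ne'
  have hsat : Saturated A {v | ξ v = 0} :=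
    saturated_setOf_eq_zero hexp fun v hv => (h.2.1 v hv).ge
  rcases hA _ h.isSuperharmonic.hereditary_setOf_eq_zero hsat with hempty | huniv
  · exact Set.eq_empty_iff_forall_notMem.mp hempty v
  · exact absurd (funext (Set.eq_univ_iff_forall.mp huniv)) hξ

end IsAlmostHarmonic

theorem stmt5_general [DecidableEq V] (A : V → V → ℝ≥0∞) (hco : Cofinal A) (β : ℝ)
    (hξ : ∃ ξ : V → ℝ≥0∞, IsAlmostHarmonic A β ξ ∧ ξ ≠ 0) :
    ∀ (n : ℕ) (v w : V), Apow A n v w ≠ ⊤ := by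
  obtain ⟨ξ, h, hne⟩ := hξ
  intro n v w
  have hexp : expb β ^ n ≠ ⊤ := ENNReal.pow_ne_top ENNReal.ofReal_ne_top
  exact (h.isSuperharmonic.apow n).apply_ne_top hexp (h.1 v) (h.apply_ne_zero hco hne w)

/-- If `A` is cofinal and there is a non-zero almost `β`-harmonic vector for
`A`, then all entries of all powers of `A` are finite. -/
theorem stmt5 [Countable V] [DecidableEq V] (A : V → V → ℝ≥0∞)
    (hAfin : ∀ v w, A v w ≠ ⊤) (hco : Cofinal A) (β : ℝ)
    (hξ : ∃ ξ : V → ℝ≥0∞, IsAlmostHarmonic A β ξ ∧ ξ ≠ 0) :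
    ∀ (n : ℕ) (v w : V), Apow A n v w ≠ ⊤ :=
  stmt5_general A hco β hξ
end

section
/- Assume the standing assumptions and let β ∈ ℝ. If there are vertices v₀, w₀ ∈ V such that ∑_{n=0}^∞ A^n_{v₀w₀} e^{-nβ} = ∞, then ∑_{n=0}^∞ A^n_{vw₀} e^{-nβ} = ∞ for all vertices v ∈ V. -/
open scoped ENNReal
open Filter

variable {V : Type*}

/-!
Off the vertices where it is infinite, the Green function `v ↦ ∑ₙ tⁿ Aⁿ_{vw}` behaves well with
respect to the graph: by the resolvent equation `G = 1 + t A G`, it is infinite at `v` as soon as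
it is infinite at a successor of `v`, and if `v` has finitely many successors, it is infinite at
`v` only if it is infinite at one of them. So `{G_w ≠ ∞}` is hereditary and saturated, and
cofinality leaves only the possibilities `∅` and `V`.
-/

theorem Cofinal.eq_empty_of_notMem {A : V → V → ℝ≥0∞} (hA : Cofinal A) {H : Set V}
    (hher : Hereditary A H) (hsat : Saturated A H) {v : V} (hv : v ∉ H) : H = ∅ :=
  (hA H hher hsat).resolve_right fun h => hv (h ▸ Set.mem_univ v)

theorem hereditary_setOf_ne_top {A : V → V → ℝ≥0∞} {c : ℝ≥0∞} {ξ : V → ℝ≥0∞} (hc : c ≠ 0)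
    (hξ : ∀ v, c * ∑' u, A v u * ξ u ≤ ξ v) : Hereditary A {v | ξ v ≠ ⊤} := by
  intro v u hv hvu hu
  have hsum : ∑' u, A v u * ξ u = ⊤ :=
    ENNReal.tsum_eq_top_of_eq_top ⟨u, by rw [hu, ENNReal.mul_top hvu]⟩
  exact hv <| top_le_iff.1 <| by simpa only [hsum, ENNReal.mul_top hc] using hξ v

theorem finite_setOf_ne_zero_of_notMem_VInf {A : V → V → ℝ≥0∞} {v : V} (hv : v ∉ VInf A) :
    {u | A v u ≠ 0}.Finite :=
  Set.not_infinite.1 fun h => hv (Or.inr h)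

theorem tsum_mul_ne_top_of_finite {ι : Type*} {a ξ : ι → ℝ≥0∞} (hfin : {i | a i ≠ 0}.Finite)
    (ha : ∀ i, a i ≠ ⊤) (hξ : ∀ i, a i ≠ 0 → ξ i ≠ ⊤) : ∑' i, a i * ξ i ≠ ⊤ := by
  have hzero : ∀ i ∉ hfin.toFinset, a i * ξ i = 0 := fun i hi => by
    rw [not_not.1 (mt hfin.mem_toFinset.2 hi), zero_mul]
  rw [tsum_eq_sum hzero]
  exact ENNReal.sum_ne_top.2 fun i hi =>
    ENNReal.mul_ne_top (ha i) (hξ i (hfin.mem_toFinset.1 hi))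

theorem saturated_setOf_ne_top {A : V → V → ℝ≥0∞} {c : ℝ≥0∞} {f ξ : V → ℝ≥0∞}
    (hA : ∀ v w, A v w ≠ ⊤) (hc : c ≠ ⊤) (hf : ∀ v, f v ≠ ⊤)
    (hξ : ∀ v, ξ v ≤ f v + c * ∑' u, A v u * ξ u) : Saturated A {v | ξ v ≠ ⊤} := by
  intro v hv hsucc
  have hsum : ∑' u, A v u * ξ u ≠ ⊤ :=
    tsum_mul_ne_top_of_finite (finite_setOf_ne_zero_of_notMem_VInf hv) (hA v) hsucc
  exact ne_top_of_le_ne_top (ENNReal.add_ne_top.2 ⟨hf v, ENNReal.mul_ne_top hc hsum⟩) (hξ v)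

/-- The Green function `∑ₙ Aⁿ_{vw} tⁿ` of `A`, the matrix entry of the formal resolvent
`(1 - tA)⁻¹`, with values in `[0,∞]`. -/
noncomputable def green [DecidableEq V] (A : V → V → ℝ≥0∞) (t : ℝ≥0∞) (v w : V) : ℝ≥0∞ :=
  ∑' n : ℕ, Apow A n v w * t ^ n

theorem green_eq_add_mul_tsum [DecidableEq V] (A : V → V → ℝ≥0∞) (t : ℝ≥0∞) (v w : V) :
    green A t v w = (if v = w then 1 else 0) + t * ∑' u, A v u * green A t u w := by
  have htail : ∑' n : ℕ, Apow A (n + 1) v w * t ^ (n + 1) = t * ∑' u, A v u * green A t u w :=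
    calc ∑' n : ℕ, Apow A (n + 1) v w * t ^ (n + 1)
      _ = ∑' n : ℕ, ∑' u, t * (A v u * (Apow A n u w * t ^ n)) := by
        simp only [Apow, ← ENNReal.tsum_mul_right]
        exact tsum_congr fun n => tsum_congr fun u => by ring
      _ = ∑' u, ∑' n : ℕ, t * (A v u * (Apow A n u w * t ^ n)) := ENNReal.tsum_comm
      _ = t * ∑' u, A v u * green A t u w := by simp only [green, ENNReal.tsum_mul_left]
  rw [green, tsum_eq_zero_add' ENNReal.summable, htail, pow_zero, mul_one, Apow]

theorem expn_eq_pow (β : ℝ) (n : ℕ) : expn β n = ENNReal.ofReal (Real.exp (-β)) ^ n := by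
  rw [expn, ← ENNReal.ofReal_pow (Real.exp_nonneg _), ← Real.exp_nat_mul, neg_mul_comm]

theorem stmt7_general [DecidableEq V] {A : V → V → ℝ≥0∞} (hcof : Cofinal A)
    (hA : ∀ v w, A v w ≠ ⊤) {t : ℝ≥0∞} (ht : t ≠ ⊤) {v₀ w₀ : V}
    (h : ∑' n : ℕ, Apow A n v₀ w₀ * t ^ n = ⊤) (v : V) :
    ∑' n : ℕ, Apow A n v w₀ * t ^ n = ⊤ := by
  change green A t v₀ w₀ = ⊤ at h
  have hδ (u : V) : (if u = w₀ then 1 else 0 : ℝ≥0∞) ≠ ⊤ := by split_ifs <;> simp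
  have ht₀ : t ≠ 0 := by
    rintro rfl
    exact hδ v₀ (by rwa [green_eq_add_mul_tsum, zero_mul, add_zero] at h)
  have hher : Hereditary A {u | green A t u w₀ ≠ ⊤} :=
    hereditary_setOf_ne_top ht₀ fun u => le_add_self.trans_eq (green_eq_add_mul_tsum A t u w₀).symm
  have hsat : Saturated A {u | green A t u w₀ ≠ ⊤} :=
    saturated_setOf_ne_top hA ht hδ fun u => (green_eq_add_mul_tsum A t u w₀).le
  have hempty : {u | green A t u w₀ ≠ ⊤} = ∅ :=
    hcof.eq_empty_of_notMem hher hsat (not_not.2 h)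
  exact not_not.1 (Set.eq_empty_iff_forall_notMem.1 hempty v)

/-- Under the standing assumptions, if `∑_n A^n_{v₀w₀} e^{-nβ} = ∞` for some
vertices `v₀, w₀`, then `∑_n A^n_{vw₀} e^{-nβ} = ∞` for every vertex `v`. -/
theorem stmt7 [Countable V] [DecidableEq V] (A : V → V → ℝ≥0∞)
    (hst : Standing A) (β : ℝ) (v₀ w₀ : V)
    (h : ∑' n : ℕ, Apow A n v₀ w₀ * expn β n = ⊤) :
    ∀ v : V, ∑' n : ℕ, Apow A n v w₀ * expn β n = ⊤ := by
  obtain ⟨hcof, -, hA, -⟩ := hst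
  simp only [expn_eq_pow] at h ⊢
  exact stmt7_general hcof hA ENNReal.ofReal_ne_top h
end

section
/- Assume the standing assumptions and that NW is non-empty but finite. Then A is recurrent, and for every β > β₀ there is no non-zero β-harmonic vector for A. -/
/-
By cofinality every vertex reaches every non-wandering vertex, so `NW` is hereditary and `A`
restricts to an irreducible matrix `M` on `NW`, whose powers are the restrictions of the powers
of `A`. If `NW` is finite, everything follows by comparing exponential growth rates.

* Irreducibility makes the growth rate of `n ↦ (M ^ n) i j` independent of `i` and `j`. If
  `M x = e ^ β x` with `x i ≠ 0`, then `e ^ (n β) x i` is the finite sum `∑ j, (M ^ n) i j * x j`,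
  so the common rate `β₀` equals `β`. A nonzero harmonic vector vanishes nowhere by cofinality,
  hence restricts to such an `x`.
* The sum of all entries of `M ^ n` is submultiplicative in `n`. If `A` were not recurrent, these
  sums would be summable against `e ^ (-n β₀)`, so `e ^ (-m β₀) M ^ m` would have total mass
  less than `1` for some `m > 0`, and submultiplicativity would force a rate below `β₀`.
-/

open scoped ENNReal
open Filter

variable {V : Type*}

open ENNReal ExpGrowth
open scoped Matrix

section ExponentialGrowth

variable {a : ℕ → ℝ≥0∞}

theorem expGrowthSup_eq_log_limsup (a : ℕ → ℝ≥0∞) :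
    expGrowthSup a = log (limsup (fun n : ℕ => a n ^ (n : ℝ)⁻¹) atTop) := by
  rw [← logOrderIso_apply, OrderIso.limsup_apply, expGrowthSup]
  refine congrArg (limsup · atTop) (funext fun n => ?_)
  rw [logOrderIso_apply, log_rpow, EReal.coe_inv, EReal.coe_natCast, mul_comm,
    EReal.div_eq_inv_mul, mul_comm]

theorem expGrowthSup_comp_add_right_le (a : ℕ → ℝ≥0∞) (d : ℕ) :
    expGrowthSup (fun n => a (n + d)) ≤ expGrowthSup a := by
  refine le_of_forall_gt_imp_ge_of_dense fun b hb => ?_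
  rcases eq_or_ne b ⊤ with rfl | hb_top
  · exact le_top
  have hexp : EReal.exp b ≠ ⊤ := by simpa using hb_top
  have hbound : ∀ᶠ n in atTop, a (n + d) ≤ EReal.exp b ^ d * EReal.exp (b * n) := by
    filter_upwards [(tendsto_add_atTop_nat d).eventually (eventually_le_exp hb)] with n hn
    rwa [mul_comm b, EReal.exp_nmul, pow_add, mul_comm, ← EReal.exp_nmul b n, mul_comm _ b] at hn
  exact (expGrowthSup_le_of_eventually_le (pow_ne_top hexp) hbound).trans_eq expGrowthSup_exp

theorem le_pow_mul_of_submultiplicative {R : Type*} [Monoid R] [Preorder R] [MulLeftMono R]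
    {a : ℕ → R} (ha : ∀ m n, a (m + n) ≤ a m * a n) (m q r : ℕ) :
    a (m * q + r) ≤ a m ^ q * a r := by
  induction q with
  | zero => simp
  | succ q ih =>
    calc a (m * (q + 1) + r) = a (m + (m * q + r)) := by congr 1; ring
      _ ≤ a m * (a m ^ q * a r) := (ha _ _).trans (by gcongr)
      _ = a m ^ (q + 1) * a r := by rw [pow_succ', mul_assoc]

theorem expGrowthSup_le_log_of_submultiplicative (ha : ∀ m n, a (m + n) ≤ a m * a n)
    (ha_top : ∀ n, a n ≠ ⊤) {m : ℕ} (hm : m ≠ 0) {s : ℝ≥0∞} (hs : s ≠ 0) (hs_top : s ≠ ⊤)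
    (hms : a m ≤ s ^ m) : expGrowthSup a ≤ log s := by
  let K := ∑ r ∈ Finset.range m, a r / s ^ r
  have hK : K ≠ ⊤ := sum_ne_top.2 fun r _ => div_ne_top (ha_top r) (pow_ne_zero r hs)
  have hbound : ∀ n, a n ≤ K * s ^ n := fun n => by
    have hr : n % m ∈ Finset.range m := Finset.mem_range.2 (Nat.mod_lt n (Nat.pos_of_ne_zero hm))
    calc a n = a (m * (n / m) + n % m) := by rw [Nat.div_add_mod]
      _ ≤ a m ^ (n / m) * a (n % m) := le_pow_mul_of_submultiplicative ha _ _ _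
      _ ≤ (s ^ m) ^ (n / m) * a (n % m) := by gcongr
      _ = (s ^ m) ^ (n / m) * (a (n % m) / s ^ (n % m) * s ^ (n % m)) := by
        rw [ENNReal.div_mul_cancel (pow_ne_zero _ hs) (pow_ne_top hs_top)]
      _ = a (n % m) / s ^ (n % m) * s ^ n := by
        rw [mul_left_comm, ← pow_mul, ← pow_add, Nat.div_add_mod]
      _ ≤ K * s ^ n := by
        gcongr
        exact Finset.single_le_sum (f := fun r => a r / s ^ r) (fun _ _ => zero_le) hr
  exact (expGrowthSup_le_of_eventually_le hK (.of_forall hbound)).trans_eq expGrowthSup_pow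

theorem expGrowthSup_neg_of_submultiplicative_of_tsum_ne_top
    (ha : ∀ m n, a (m + n) ≤ a m * a n) (ha_sum : ∑' n, a n ≠ ⊤) : expGrowthSup a < 0 := by
  obtain ⟨m, hm1, hm⟩ : ∃ m, a m < 1 ∧ m ≠ 0 :=
    (((tendsto_atTop_zero_of_tsum_ne_top ha_sum).eventually_lt_const one_pos).and
      (eventually_ne_atTop 0)).exists
  obtain ⟨s, hms, hs1⟩ : ∃ s, a m ^ (m : ℝ)⁻¹ < s ∧ s < 1 :=
    exists_between (rpow_lt_one hm1 (by positivity))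
  have hle : a m ≤ s ^ m := by
    rw [← rpow_natCast, ← rpow_inv_le_iff (by positivity)]
    exact hms.le
  exact (expGrowthSup_le_log_of_submultiplicative ha (ENNReal.ne_top_of_tsum_ne_top ha_sum) hm
    hms.ne_bot hs1.ne_top hle).trans_lt (log_lt_zero_iff.2 hs1)

end ExponentialGrowth

section IrreducibleMatrix

theorem sum_sum_mul_apply_le {l m n : Type*} [Fintype l] [Fintype m] [Fintype n]
    (M : Matrix l m ℝ≥0∞) (N : Matrix m n ℝ≥0∞) :
    ∑ i, ∑ k, (M * N) i k ≤ (∑ i, ∑ j, M i j) * ∑ j, ∑ k, N j k := by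
  have hrow : ∀ j, ∑ k, N j k ≤ ∑ j, ∑ k, N j k := fun j =>
    Finset.single_le_sum (f := fun j => ∑ k, N j k) (fun _ _ => zero_le) (Finset.mem_univ j)
  calc ∑ i, ∑ k, (M * N) i k = ∑ i, ∑ j, M i j * ∑ k, N j k := by
        simp_rw [Matrix.mul_apply, Finset.mul_sum]
        exact Finset.sum_congr rfl fun i _ => Finset.sum_comm
    _ ≤ ∑ i, ∑ j, M i j * ∑ j, ∑ k, N j k :=
      Finset.sum_le_sum fun _ _ => Finset.sum_le_sum fun j _ => mul_le_mul' le_rfl (hrow j)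
    _ = (∑ i, ∑ j, M i j) * ∑ j, ∑ k, N j k := by simp_rw [Finset.sum_mul]

variable {ι : Type*} [Fintype ι] [DecidableEq ι] {M : Matrix ι ι ℝ≥0∞}

theorem pow_apply_mul_pow_apply_le (M : Matrix ι ι ℝ≥0∞) (m n : ℕ) (i j k : ι) :
    (M ^ m) i j * (M ^ n) j k ≤ (M ^ (m + n)) i k := by
  rw [pow_add, Matrix.mul_apply]
  exact Finset.single_le_sum (f := fun j => (M ^ m) i j * (M ^ n) j k) (fun _ _ => zero_le)
    (Finset.mem_univ j)

theorem pow_mulVec_eq_smul {R : Type*} [CommSemiring R] {M : Matrix ι ι R} {c : R} {x : ι → R}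
    (hx : M *ᵥ x = c • x) (n : ℕ) : (M ^ n) *ᵥ x = c ^ n • x := by
  induction n with
  | zero => simp
  | succ n ih =>
    rw [pow_succ, ← Matrix.mulVec_mulVec, hx, Matrix.mulVec_smul, ih, smul_smul, pow_succ']

/-- Irreducibility of a square matrix with entries in `[0,∞]`: the graph of its nonzero entries
is strongly connected. Mathlib's `Matrix.IsIrreducible` is not available here because it requires
the entries to lie in a ring. The exponent `0` is allowed, so the `1 × 1` zero matrix is
irreducible. -/
def IsIrreducibleMatrix (M : Matrix ι ι ℝ≥0∞) : Prop :=
  ∀ i j, ∃ n, (M ^ n) i j ≠ 0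

namespace IsIrreducibleMatrix

theorem smul (hM : IsIrreducibleMatrix M) {c : ℝ≥0∞} (hc : c ≠ 0) :
    IsIrreducibleMatrix (c • M) := fun i j => by
  obtain ⟨n, hn⟩ := hM i j
  refine ⟨n, ?_⟩
  rw [smul_pow]
  exact mul_ne_zero (pow_ne_zero n hc) hn

theorem exists_mul_pow_apply_le (hM : IsIrreducibleMatrix M) (i j k l : ι) :
    ∃ c ≠ 0, ∃ d, ∀ n, c * (M ^ n) i j ≤ (M ^ (n + d)) k l := by
  obtain ⟨p, hp⟩ := hM k i
  obtain ⟨q, hq⟩ := hM j l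
  refine ⟨(M ^ p) k i * (M ^ q) j l, mul_ne_zero hp hq, p + q, fun n => ?_⟩
  calc (M ^ p) k i * (M ^ q) j l * (M ^ n) i j
      = (M ^ p) k i * (M ^ n) i j * (M ^ q) j l := by ring
    _ ≤ (M ^ (p + n)) k j * (M ^ q) j l := by gcongr; exact pow_apply_mul_pow_apply_le M p n k i j
    _ ≤ (M ^ (p + n + q)) k l := pow_apply_mul_pow_apply_le M (p + n) q k j l
    _ = (M ^ (n + (p + q))) k l := by rw [add_comm p n, add_assoc]

theorem expGrowthSup_pow_apply_eq (hM : IsIrreducibleMatrix M) (i j k l : ι) :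
    expGrowthSup (fun n => (M ^ n) i j) = expGrowthSup (fun n => (M ^ n) k l) := by
  suffices h : ∀ i j k l, expGrowthSup (fun n => (M ^ n) i j) ≤ expGrowthSup (fun n => (M ^ n) k l)
    from le_antisymm (h i j k l) (h k l i j)
  intro i j k l
  obtain ⟨c, hc, d, hcd⟩ := hM.exists_mul_pow_apply_le i j k l
  exact (expGrowthSup_of_eventually_ge hc (.of_forall hcd)).trans
    (expGrowthSup_comp_add_right_le (fun n => (M ^ n) k l) d)

theorem tsum_pow_apply_ne_top (hM : IsIrreducibleMatrix M) {k l : ι}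
    (h : ∑' n, (M ^ n) k l ≠ ⊤) (i j : ι) : ∑' n, (M ^ n) i j ≠ ⊤ := by
  obtain ⟨c, hc, d, hcd⟩ := hM.exists_mul_pow_apply_le i j k l
  have hle : c * ∑' n, (M ^ n) i j ≤ ∑' n, (M ^ n) k l := by
    rw [← ENNReal.tsum_mul_left]
    exact (ENNReal.tsum_le_tsum hcd).trans
      (ENNReal.tsum_comp_le_tsum_of_injective (add_left_injective d) fun n => (M ^ n) k l)
  exact fun htop => h (top_le_iff.1 (by simpa [htop, mul_top hc] using hle))

theorem tsum_pow_apply_eq_top (hM : IsIrreducibleMatrix M) {i j : ι}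
    (h : 0 ≤ expGrowthSup fun n => (M ^ n) i j) : ∑' n, (M ^ n) i j = ⊤ := by
  by_contra hsum
  let mass (n : ℕ) : ℝ≥0∞ := ∑ k, ∑ l, (M ^ n) k l
  have hmass_mul : ∀ m n, mass (m + n) ≤ mass m * mass n := fun m n => by
    simpa only [mass, pow_add] using sum_sum_mul_apply_le (M ^ m) (M ^ n)
  have hmass_sum : ∑' n, mass n ≠ ⊤ := by
    simp_rw [mass, Summable.tsum_finsetSum fun _ _ => ENNReal.summable]
    exact sum_ne_top.2 fun k _ => sum_ne_top.2 fun l _ => hM.tsum_pow_apply_ne_top hsum k l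
  have hle_mass : ∀ n, (M ^ n) i j ≤ mass n := fun n =>
    (Finset.single_le_sum (f := fun l => (M ^ n) i l) (fun _ _ => zero_le)
      (Finset.mem_univ j)).trans
      (Finset.single_le_sum (f := fun k => ∑ l, (M ^ n) k l) (fun _ _ => zero_le)
        (Finset.mem_univ i))
  exact ((h.trans (expGrowthSup_monotone hle_mass)).trans_lt
    (expGrowthSup_neg_of_submultiplicative_of_tsum_ne_top hmass_mul hmass_sum)).false

theorem log_eigenvalue_eq_expGrowthSup (hM : IsIrreducibleMatrix M) {c : ℝ≥0∞} {x : ι → ℝ≥0∞}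
    (hx : M *ᵥ x = c • x) (hx_zero : x ≠ 0) (hx_top : ∀ i, x i ≠ ⊤) (k l : ι) :
    log c = expGrowthSup fun n => (M ^ n) k l := by
  obtain ⟨i, hi⟩ := Function.ne_iff.1 hx_zero
  have hsum : ∀ n, ∑ j, (M ^ n) i j * x j = c ^ n * x i := fun n =>
    congrFun (pow_mulVec_eq_smul hx n) i
  rw [hM.expGrowthSup_pow_apply_eq k l i i]
  apply le_antisymm
  · calc log c = expGrowthSup fun n => c ^ n := expGrowthSup_pow.symm
      _ ≤ expGrowthSup (∑ j, fun n => (M ^ n) i j * x j) :=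
        expGrowthSup_of_eventually_ge hi <| .of_forall fun n => by
          rw [Finset.sum_apply, hsum, mul_comm]
      _ = ⨆ j ∈ Finset.univ, expGrowthSup fun n => (M ^ n) i j * x j := expGrowthSup_sum _ _
      _ ≤ expGrowthSup fun n => (M ^ n) i i := iSup₂_le fun j _ => by
        rw [hM.expGrowthSup_pow_apply_eq i i i j]
        exact expGrowthSup_le_of_eventually_le (hx_top j) (.of_forall fun n => (mul_comm _ _).le)
  · calc expGrowthSup (fun n => (M ^ n) i i)
      _ ≤ expGrowthSup fun n => x i * c ^ n :=
        expGrowthSup_of_eventually_ge hi <| .of_forall fun n => by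
          rw [mul_comm, mul_comm (x i), ← hsum]
          exact Finset.single_le_sum (f := fun j => (M ^ n) i j * x j) (fun _ _ => zero_le)
            (Finset.mem_univ i)
      _ ≤ expGrowthSup fun n => c ^ n :=
        expGrowthSup_le_of_eventually_le (hx_top i) (.of_forall fun _ => le_rfl)
      _ = log c := expGrowthSup_pow

end IsIrreducibleMatrix

end IrreducibleMatrix

section Exponentials

theorem log_expb (β : ℝ) : log (expb β) = β := by
  rw [expb, log_ofReal_of_pos (Real.exp_pos β), Real.log_exp]

theorem expb_ne_zero (β : ℝ) : expb β ≠ 0 :=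
  (ENNReal.ofReal_pos.2 (Real.exp_pos β)).ne'

theorem expn_eq_expb_neg_pow (β : ℝ) (n : ℕ) : expn β n = expb (-β) ^ n := by
  rw [expn, expb, ← ENNReal.ofReal_pow (Real.exp_pos _).le, ← Real.exp_nat_mul, neg_mul_comm]

end Exponentials

section Cofinal

variable {A : V → V → ℝ≥0∞} {β : ℝ} {ξ : V → ℝ≥0∞}

theorem Cofinal.transGen_of_mem_NW (hA : Cofinal A) (v : V) {x : V} (hx : x ∈ NW A) :
    Relation.TransGen (fun a b => A a b ≠ 0) v x := by
  let H : Set V := {u | ∀ y ∈ NW A, Relation.TransGen (fun a b => A a b ≠ 0) u y →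
    Relation.TransGen (fun a b => A a b ≠ 0) v y}
  have hH_hereditary : Hereditary A H := fun u u' hu huu' y hy hu'y => hu y hy (hu'y.head huu')
  have hH_saturated : Saturated A H := fun u _ hu y hy huy => by
    obtain ⟨z, huz, hzy⟩ := Relation.TransGen.head'_iff.1 huy
    rcases Relation.reflTransGen_iff_eq_or_transGen.1 hzy with rfl | hzy
    -- The path is a single edge, and the loop at `y` serves as the path that remains.
    · exact hu y huz y hy hy
    · exact hu z huz y hy hzy
  have hv : v ∈ H := fun _ _ => id
  have hH : H = Set.univ :=
    (hA H hH_hereditary hH_saturated).resolve_left (Set.nonempty_of_mem hv).ne_empty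
  exact (hH ▸ Set.mem_univ x : x ∈ H) x hx hx

theorem Cofinal.hereditary_NW (hA : Cofinal A) : Hereditary A (NW A) :=
  fun _ w hv hvw => (hA.transGen_of_mem_NW w hv).tail hvw

theorem IsHarmonic.apply_eq_zero_iff (hξ : IsHarmonic A β ξ) (v : V) :
    ξ v = 0 ↔ ∀ w, A v w ≠ 0 → ξ w = 0 := by
  calc ξ v = 0 ↔ expb β * ξ v = 0 := (mul_eq_zero_iff_left (expb_ne_zero β)).symm
    _ ↔ ∑' w, A v w * ξ w = 0 := by rw [hξ.2 v]
    _ ↔ ∀ w, A v w ≠ 0 → ξ w = 0 := by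
      simp only [ENNReal.tsum_eq_zero, mul_eq_zero, or_iff_not_imp_left, ne_eq]

theorem IsHarmonic.apply_ne_zero (hξ : IsHarmonic A β ξ) (hA : Cofinal A) (hξ_zero : ξ ≠ 0)
    (v : V) : ξ v ≠ 0 := by
  have hH : {u | ξ u = 0} = ∅ ∨ {u | ξ u = 0} = Set.univ :=
    hA _ (fun u w hu => (hξ.apply_eq_zero_iff u).1 hu w) fun u _ => (hξ.apply_eq_zero_iff u).2
  rcases hH with hempty | huniv
  · exact Set.eq_empty_iff_forall_notMem.1 hempty v
  · exact absurd (funext (Set.eq_univ_iff_forall.1 huniv)) hξ_zero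

end Cofinal

section Restriction

variable {A : V → V → ℝ≥0∞} {H : Set V}

/-- The block of `A` with rows and columns in `H`, as a matrix; applied to `H = NW A`, where
finiteness makes matrix multiplication available. -/
def restrictTo (A : V → V → ℝ≥0∞) (H : Set V) : Matrix H H ℝ≥0∞ :=
  Matrix.of fun v w => A v w

theorem Hereditary.tsum_mul_eq_sum [Fintype H] (hH : Hereditary A H) (v : H) (f : V → ℝ≥0∞) :
    ∑' w, A v w * f w = ∑ w : H, restrictTo A H v w * f w := by
  have hsupp : Function.support (fun w => A v w * f w) ⊆ H :=
    fun w hw => hH v.2 (left_ne_zero_of_mul hw)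
  rw [← tsum_subtype_eq_of_support_subset hsupp, tsum_fintype]
  rfl

theorem Hereditary.restrictTo_mulVec [Fintype H] (hH : Hereditary A H) {β : ℝ} {ξ : V → ℝ≥0∞}
    (hξ : IsHarmonic A β ξ) :
    restrictTo A H *ᵥ (fun v => ξ v) = expb β • fun v : H => ξ v :=
  funext fun v => (hH.tsum_mul_eq_sum v ξ).symm.trans (hξ.2 v)

variable [DecidableEq V]

theorem Hereditary.restrictTo_pow_apply [Fintype H] (hH : Hereditary A H) (n : ℕ) (v w : H) :
    (restrictTo A H ^ n) v w = Apow A n v w := by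
  induction n generalizing v with
  | zero => simp [Apow, Matrix.one_apply, Subtype.ext_iff]
  | succ n ih =>
    simp_rw [pow_succ', Matrix.mul_apply, ih]
    exact (hH.tsum_mul_eq_sum v fun u => Apow A n u w).symm

theorem exists_Apow_ne_zero {v w : V} (h : Relation.TransGen (fun a b => A a b ≠ 0) v w) :
    ∃ n, Apow A n v w ≠ 0 := by
  induction h using Relation.TransGen.head_induction_on with
  | single hvw =>
    exact ⟨1, fun h => hvw (by simpa [Apow] using ENNReal.tsum_eq_zero.1 h w)⟩
  | @head _ u hvu _ ih =>
    obtain ⟨n, hn⟩ := ih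
    exact ⟨n + 1, fun h => mul_ne_zero hvu hn (ENNReal.tsum_eq_zero.1 h u)⟩

theorem Cofinal.isIrreducibleMatrix_restrictTo_NW [Fintype (NW A)] (hA : Cofinal A) :
    IsIrreducibleMatrix (restrictTo A (NW A)) := fun v w => by
  obtain ⟨n, hn⟩ := exists_Apow_ne_zero (hA.transGen_of_mem_NW v w.2)
  exact ⟨n, by rwa [hA.hereditary_NW.restrictTo_pow_apply]⟩

end Restriction

section FiniteNonWandering

variable [DecidableEq V] {A : V → V → ℝ≥0∞} {β₀ : ℝ} {v : V}

theorem Cofinal.expGrowthSup_restrictTo_NW_pow_apply [Fintype (NW A)] (hA : Cofinal A)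
    (hv : v ∈ NW A)
    (hβ₀ : limsup (fun n : ℕ => Apow A n v v ^ (n : ℝ)⁻¹) atTop = expb β₀) (u w : NW A) :
    expGrowthSup (fun n => (restrictTo A (NW A) ^ n) u w) = β₀ := by
  rw [hA.isIrreducibleMatrix_restrictTo_NW.expGrowthSup_pow_apply_eq u w ⟨v, hv⟩ ⟨v, hv⟩]
  simp_rw [hA.hereditary_NW.restrictTo_pow_apply]
  rw [expGrowthSup_eq_log_limsup, hβ₀, log_expb]

theorem Cofinal.tsum_Apow_mul_expn_eq_top (hA : Cofinal A) (hfin : (NW A).Finite) (hv : v ∈ NW A)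
    (hβ₀ : limsup (fun n : ℕ => Apow A n v v ^ (n : ℝ)⁻¹) atTop = expb β₀) {u : V}
    (hu : u ∈ NW A) : ∑' n, Apow A n u u * expn β₀ n = ⊤ := by
  have := hfin.fintype
  let M := restrictTo A (NW A)
  have hpow : ∀ n, ((expb (-β₀) • M) ^ n) ⟨u, hu⟩ ⟨u, hu⟩ = Apow A n u u * expn β₀ n := fun n => by
    rw [smul_pow, Matrix.smul_apply, hA.hereditary_NW.restrictTo_pow_apply, smul_eq_mul, mul_comm,
      expn_eq_expb_neg_pow]
  have hgrowth : 0 ≤ expGrowthSup fun n => ((expb (-β₀) • M) ^ n) ⟨u, hu⟩ ⟨u, hu⟩ := by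
    calc (0 : EReal)
      _ = expGrowthInf (fun n => expb (-β₀) ^ n)
            + expGrowthSup (fun n => (M ^ n) ⟨u, hu⟩ ⟨u, hu⟩) := by
        rw [expGrowthInf_pow, log_expb, hA.expGrowthSup_restrictTo_NW_pow_apply hv hβ₀,
          ← EReal.coe_add, neg_add_cancel, EReal.coe_zero]
      _ ≤ expGrowthSup fun n => expb (-β₀) ^ n * (M ^ n) ⟨u, hu⟩ ⟨u, hu⟩ := le_expGrowthSup_mul'
      _ = expGrowthSup fun n => ((expb (-β₀) • M) ^ n) ⟨u, hu⟩ ⟨u, hu⟩ := by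
        simp_rw [smul_pow, Matrix.smul_apply, smul_eq_mul]
  simp_rw [← hpow]
  exact (hA.isIrreducibleMatrix_restrictTo_NW.smul (expb_ne_zero _)).tsum_pow_apply_eq_top hgrowth

theorem IsHarmonic.eq_of_limsup_eq_expb {β : ℝ} {ξ : V → ℝ≥0∞} (hξ : IsHarmonic A β ξ)
    (hξ_zero : ξ ≠ 0) (hA : Cofinal A) (hfin : (NW A).Finite) (hv : v ∈ NW A)
    (hβ₀ : limsup (fun n : ℕ => Apow A n v v ^ (n : ℝ)⁻¹) atTop = expb β₀) : β = β₀ := by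
  have := hfin.fintype
  have hne : (fun u : NW A => ξ u) ≠ 0 :=
    Function.ne_iff.2 ⟨⟨v, hv⟩, hξ.apply_ne_zero hA hξ_zero v⟩
  have hlog := hA.isIrreducibleMatrix_restrictTo_NW.log_eigenvalue_eq_expGrowthSup
    (hA.hereditary_NW.restrictTo_mulVec hξ) hne (fun u => hξ.1 u) ⟨v, hv⟩ ⟨v, hv⟩
  rwa [log_expb, hA.expGrowthSup_restrictTo_NW_pow_apply hv hβ₀, EReal.coe_eq_coe_iff] at hlog

end FiniteNonWandering

theorem stmt14_general [DecidableEq V] {A : V → V → ℝ≥0∞} (hA : Cofinal A)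
    (hfin : (NW A).Finite) {v : V} (hv : v ∈ NW A) {β₀ : ℝ}
    (hβ₀ : limsup (fun n : ℕ => Apow A n v v ^ (n : ℝ)⁻¹) atTop = expb β₀) :
    (∀ u ∈ NW A, ∑' n, Apow A n u u * expn β₀ n = ⊤) ∧
      ∀ β : ℝ, β ≠ β₀ → ∀ ξ : V → ℝ≥0∞, IsHarmonic A β ξ → ξ = 0 :=
  ⟨fun _ hu => hA.tsum_Apow_mul_expn_eq_top hfin hv hβ₀ hu, fun _ hβ _ hξ =>
    by_contra fun hξ_zero => hβ (hξ.eq_of_limsup_eq_expb hξ_zero hA hfin hv hβ₀)⟩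

/-- Under the standing assumptions, if `NW` is non-empty and finite then
`A` is recurrent and for every `β > β₀` there is no non-zero `β`-harmonic vector. -/
theorem stmt14 [Countable V] [DecidableEq V] (A : V → V → ℝ≥0∞)
    (hst : Standing A) (β₀ : ℝ)
    (hβ₀ : ∀ v ∈ NW A,
      Filter.limsup (fun n : ℕ => Apow A n v v ^ ((n : ℝ)⁻¹)) Filter.atTop = expb β₀)
    (hne : (NW A).Nonempty) (hfin : (NW A).Finite) :
    (∀ v ∈ NW A, ∑' n : ℕ, Apow A n v v * expn β₀ n = ⊤) ∧
      ∀ β : ℝ, β₀ < β → ∀ ξ : V → ℝ≥0∞, IsHarmonic A β ξ → ξ = 0 := by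
  obtain ⟨v, hv⟩ := hne
  have h := stmt14_general hst.1 hfin hv (hβ₀ v hv)
  exact ⟨h.1, fun β hβ => h.2 β hβ.ne'⟩
end
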